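/- Let R be a division ring and P(x) ∈ R[x]. If P(x) has two distinct right roots in the same conjugacy class of R, then P(x) has infinitely many right roots in that conjugacy class. -/

import Mathlib

open Polynomial

lemma aux_div {R : Type*} [DivisionRing R] (b : R) (P : R[X]) :
    ∃ (Q : R[X]) (c : R), P = Q * (X - C b) + C c := by
  induction P using Polynomial.induction_on with
  | C a => exact ⟨0, a, by simp⟩
  | add p q hp hq =>
    obtain ⟨Q, c, h⟩ := hp
    obtain ⟨Q', c', h'⟩ := hq
    refine ⟨Q + Q', c + c', ?_⟩
    rw [h, h', C_add]; noncomm_ring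
  | monomial n a h =>
    obtain ⟨Q, c, h⟩ := h
    refine ⟨C a * X ^ n + Q * C b, c * b, ?_⟩
    have e : C a * X ^ (n+1) = C a * X ^ n * (X - C b) + (C a * X ^ n) * C b := by
      rw [pow_succ]; noncomm_ring
    rw [e]
    nth_rewrite 2 [h]
    have : (X : R[X]) * C b = C b * X := X_mul_C b
    rw [C_mul, add_mul, add_mul, add_assoc, mul_assoc Q, mul_assoc Q, sub_mul, mul_sub (C b), this]

lemma aux_comp {R : Type*} [DivisionRing R] (a b r : R) (Q : R[X]) :
    (Q * (X - C b) * C r).eval a = (Q * C (r * a - b * r)).eval a := by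
  have : Q * (X - C b) * C r = (Q * C r) * (X - C a) + Q * C (r * a - b * r) := by
    have : (X : R[X]) * C r = C r * X := X_mul_C r
    rw [mul_assoc, mul_assoc, ← mul_add, sub_mul, this, C_sub, C_mul, C_mul]
    congr 1
    noncomm_ring
  rw [this, eval_add, eval_mul_X_sub_C, zero_add]

lemma aux_root {R : Type*} [DivisionRing R] (a r : R) (hr : r ≠ 0) (P : R[X]) :
    (P * C r).eval a = P.eval (r * a * r⁻¹) * r := by
  obtain ⟨Q, c, h⟩ := aux_div (r * a * r⁻¹) P
  rw [h, add_mul, eval_add, aux_comp, eval_add, eval_mul_X_sub_C, ← C_mul]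
  simp [hr]

lemma aux_fin {R : Type*} [DivisionRing R] (a : R) (hC : {c : R | c * a = a * c}.Finite) (n : ℕ) :
    ∀ P : R[X], P ≠ 0 → P.natDegree = n → {r : R | (P * C r).eval a = 0}.Finite := by
  induction n using Nat.strong_induction_on with
  | _ n ih =>
  intro P hP hn
  by_cases h : ∃ r : R, r ≠ 0 ∧ (P * C r).eval a = 0
  · obtain ⟨r, hr, h0⟩ := h
    rw [aux_root a r hr] at h0
    obtain ⟨Q, c, h⟩ := aux_div (r * a * r⁻¹) P
    have hc : c = 0 := by
      have h1 : P.eval (r * a * r⁻¹) = 0 := by simpa [hr] using h0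
      rw [h, eval_add, eval_mul_X_sub_C] at h1
      simpa using h1
    rw [hc, C_0, add_zero] at h
    have hQ : Q ≠ 0 := by rintro rfl; simp at h; exact hP h
    have hd : Q.natDegree < n := by
      rw [← hn, h, natDegree_mul hQ (X_sub_C_ne_zero _), natDegree_X_sub_C]; omega
    have hf := ih _ hd Q hQ rfl
    have := hf.preimage' (f := fun s => s * a - r * a * r⁻¹ * s) (fun y _ => by
      by_cases hy : ∃ s', s' * a - r * a * r⁻¹ * s' = y
      · obtain ⟨s', rfl⟩ := hy
        refine (hC.image (fun c => s' + r * c)).subset ?_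
        intro s hs
        simp only [Set.mem_preimage, Set.mem_singleton_iff] at hs
        refine ⟨r⁻¹ * (s - s'), ?_, by simp [hr]⟩
        have e : (s - s') * a = r * a * r⁻¹ * (s - s') := by
          rw [sub_mul, mul_sub]
          rw [sub_eq_sub_iff_sub_eq_sub] at hs
          exact hs
        show r⁻¹ * (s - s') * a = a * (r⁻¹ * (s - s'))
        rw [mul_assoc, e]
        simp [mul_assoc, hr]
      · refine Set.Finite.subset Set.finite_empty ?_
        intro s hs
        exact hy ⟨s, hs⟩)
    refine this.subset ?_
    intro s hs
    simp only [Set.mem_ofPred_eq, Set.mem_preimage] at hs ⊢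
    rw [← aux_comp, ← h, hs]
  · refine (Set.finite_singleton (0:R)).subset ?_
    intro r hr
    by_contra h'
    exact h ⟨r, h', hr⟩

lemma aux_C {R : Type*} [DivisionRing R] (a q : R) (hq : q * a ≠ a * q) :
    {c : R | c * a = a * c}.Infinite := by
  intro hC
  obtain ⟨m, n, hmn, he⟩ : ∃ m n : ℕ, m < n ∧ a ^ m = a ^ n := by
    have := hC.to_subtype
    obtain ⟨m, n, hne, he⟩ := Finite.exists_ne_map_eq_of_infinite
      (fun n : ℕ => (⟨a ^ n, (pow_succ a n).symm.trans (pow_succ' a n)⟩ : {c : R | c * a = a * c}))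
    have he := congrArg Subtype.val he
    rcases lt_or_gt_of_ne hne with h | h
    · exact ⟨m, n, h, he⟩
    · exact ⟨n, m, h, he.symm⟩
  have hP : (X ^ n - X ^ m : R[X]) ≠ 0 := by
    intro h
    have := congrArg (fun p => p.coeff n) h
    simp [coeff_X_pow, hmn.ne'] at this
  have hf := aux_fin a hC _ _ hP rfl
  have hu : {r : R | ((X ^ n - X ^ m : R[X]) * C r).eval a = 0} = Set.univ := by
    ext r
    simp [sub_mul, X_pow_mul_C, he]
  rw [hu] at hf
  have : Finite R := Set.finite_univ_iff.mp hf
  exact hq ((littleWedderburn R).mul_comm q a)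

/-- If a polynomial over a division ring has two distinct right roots in one conjugacy
class, then it has infinitely many right roots in that class. -/
theorem stmt11 {R : Type*} [DivisionRing R] (P : R[X]) (a b : R) (hab : a ≠ b)
    (ha : P.eval a = 0) (hb : P.eval b = 0)
    (hconj : ∃ q : R, q ≠ 0 ∧ b = q * a * q⁻¹) :
    {d : R | (∃ q : R, q ≠ 0 ∧ d = q * a * q⁻¹) ∧ P.eval d = 0}.Infinite := by
  obtain ⟨q, hq, rfl⟩ := hconj
  have hqa : q * a ≠ a * q := by
    intro h
    apply hab
    rw [h, mul_assoc, mul_inv_cancel₀ hq, mul_one]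
  have hne : ∀ c, c * a = a * c → q + c ≠ 0 := by
    intro c hc h
    rw [eq_neg_of_add_eq_zero_left h] at hqa
    simp [hc] at hqa
  refine Set.infinite_of_injOn_mapsTo (f := fun c => (q + c) * a * (q + c)⁻¹) ?_ ?_ (aux_C a q hqa)
  · intro c hc c' hc' h
    have hc : c * a = a * c := hc
    have hc' : c' * a = a * c' := hc'
    have h : (q + c) * a * (q + c)⁻¹ = (q + c') * a * (q + c')⁻¹ := h
    have n1 := hne c hc
    have n2 := hne c' hc'
    obtain ⟨d, hd⟩ : ∃ d, d = (q + c')⁻¹ * (q + c) := ⟨_, rfl⟩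
    have e1 : q + c = (q + c') * d := by rw [hd, mul_inv_cancel_left₀ n2]
    have e2 : d * a = a * d := by
      have : (q + c) * a = (q + c') * a * (q + c')⁻¹ * (q + c) := by
        rw [← h, inv_mul_cancel_right₀ n1]
      rw [hd, mul_assoc, this]
      simp only [mul_assoc]
      rw [inv_mul_cancel_left₀ n2]
    have e3 : q * (1 - d) = c' * d - c := by
      rw [add_mul] at e1
      rw [mul_sub, mul_one, sub_eq_sub_iff_add_eq_add, e1, add_comm]
    by_cases h1 : 1 - d = 0
    · have : d = 1 := (sub_eq_zero.mp h1).symm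
      rw [this, mul_one] at e1
      exact add_left_cancel e1
    · exfalso
      apply hqa
      have q1 : q = (c' * d - c) * (1 - d)⁻¹ := by rw [← e3, mul_inv_cancel_right₀ h1]
      have k : Commute q a := by
        rw [q1]
        have kd : Commute d a := e2
        have kc : Commute c a := hc
        have kc' : Commute c' a := hc'
        exact ((kc'.mul_left kd).sub_left kc).mul_left
          (((Commute.one_left a).sub_left kd).inv_left₀)
      exact k
  · intro c hc
    have hc : c * a = a * c := hc
    have n1 := hne c hc
    refine ⟨⟨q + c, n1, rfl⟩, ?_⟩
    have h1 : (P * C (q + c)).eval a = 0 := by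
      rw [C_add, mul_add, eval_add, aux_root a q hq, hb, zero_mul, zero_add]
      by_cases h0 : c = 0
      · simp [h0]
      · rw [aux_root a c h0, hc, mul_inv_cancel_right₀ h0, ha, zero_mul]
    rw [aux_root a _ n1] at h1
    exact (mul_eq_zero.mp h1).resolve_right n1
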